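/- arXiv:2507.15145 — 5 statements merged into one kernel-verified Lean document; each statement's English description precedes it below -/
import Mathlib

section
/- Let C : Fin L → ℝ be the confidence-score sequence of an event and let αl ≤ αl', αu ≤ αu' be real thresholds with αl' < αu'. If the event is predicted normal under (αl, αu), then it is predicted normal under (αl', αu'). In other words, the predicate 'predicted normal' is monotone (isotone) with respect to the componentwise order on the threshold pair: raising either threshold can only increase the chance of a normal classification. -/
/-- An event with confidence scores `C` is predicted critical under thresholds `(αl, αu)`
if some layer `q` has `C q ≥ αu` while all earlier layers have scores strictly between
the thresholds. -/
def PredCritical {L : ℕ} (C : Fin L → ℝ) (αl αu : ℝ) : Prop :=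
  ∃ q : Fin L, αu ≤ C q ∧ ∀ t : Fin L, t < q → αl < C t ∧ C t < αu

/-- An event is predicted normal if some layer `q` has `C q ≤ αl` with all earlier layers
strictly between the thresholds, or if every layer score lies strictly between the
thresholds. -/
def PredNormal {L : ℕ} (C : Fin L → ℝ) (αl αu : ℝ) : Prop :=
  (∃ q : Fin L, C q ≤ αl ∧ ∀ t : Fin L, t < q → αl < C t ∧ C t < αu) ∨
  (∀ t : Fin L, αl < C t ∧ C t < αu)

theorem predNormal_monotone {L : ℕ} (C : Fin L → ℝ) (αl αl' αu αu' : ℝ)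
    (hl : αl ≤ αl') (hu : αu ≤ αu') (h' : αl' < αu')
    (hnorm : PredNormal C αl αu) : PredNormal C αl' αu' := by
  by_cases hex : ∃ n : ℕ, ∃ h : n < L, C ⟨n, h⟩ ≤ αl'
  · classical
    obtain ⟨hq, hCq⟩ := Nat.find_spec hex
    refine Or.inl ⟨⟨Nat.find hex, hq⟩, hCq, fun t ht => ?_⟩
    have hlow : αl' < C t := by
      by_contra hc
      exact Nat.find_min hex (m := t.val) ht ⟨t.isLt, not_lt.mp hc⟩
    refine ⟨hlow, ?_⟩
    rcases hnorm with ⟨q, hqC, hqt⟩ | hall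
    · have hle : Nat.find hex ≤ q.val := Nat.find_min' hex ⟨q.isLt, hqC.trans hl⟩
      exact (hqt t (Fin.lt_def.mpr (lt_of_lt_of_le (Fin.lt_def.mp ht) hle))).2.trans_le hu
    · exact (hall t).2.trans_le hu
  · refine Or.inr fun t => ⟨?_, ?_⟩
    · by_contra hc
      exact hex ⟨t.val, t.isLt, not_lt.mp hc⟩
    · rcases hnorm with ⟨q, hqC, _⟩ | hall
      · exact absurd ⟨q.val, q.isLt, hqC.trans hl⟩ hex
      · exact (hall t).2.trans_le hu
end

section
/- Let P be a finite index set of events, each event k ∈ P having a confidence-score sequence C k : Fin L → ℝ. For real thresholds αl ≤ αl' and αu ≤ αu', the number of events of P that are predicted critical under (αl', αu') is at most the number of events of P that are predicted critical under (αl, αu). That is, the true-positive count |{k ∈ P : k is predicted critical under (αl, αu)}| is antitone with respect to the componentwise order on (αl, αu). -/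
open Classical

theorem truePositiveCount_antitone {L : ℕ} {ι : Type*} (P : Finset ι)
    (C : ι → Fin L → ℝ) (αl αl' αu αu' : ℝ) (hl : αl ≤ αl') (hu : αu ≤ αu') :
    (P.filter (fun k => PredCritical (C k) αl' αu')).card ≤
      (P.filter (fun k => PredCritical (C k) αl αu)).card := by
  refine Finset.card_le_card (Finset.monotone_filter_right P ?_)
  rintro k _ ⟨q, hq, h⟩
  obtain ⟨m, hm, hmin⟩ := WellFounded.has_min (wellFounded_lt (α := Fin L))
    {t | αu ≤ C k t} ⟨q, hu.trans hq⟩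
  have hmq : m ≤ q := not_lt.mp (hmin q (hu.trans hq))
  exact ⟨m, hm, fun t ht => ⟨hl.trans_lt (h t (ht.trans_le hmq)).1,
    not_le.mp fun hc => hmin t hc ht⟩⟩
end

section
/- Let P be a nonempty finite index set of ground-truth critical events, each event k ∈ P having a confidence-score sequence C k : Fin L → ℝ, and define the utility U(αl, αu) = |{k ∈ P : k is predicted critical under (αl, αu)}| / |P|. Then for all real thresholds, 0 ≤ U(αl, αu) ≤ 1, and U is antitone with respect to the componentwise order on (αl, αu): if αl ≤ αl' and αu ≤ αu' then U(αl', αu') ≤ U(αl, αu). -/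
open Classical

/-- The utility (true positive rate) of a finite family of ground-truth critical events. -/
noncomputable def Utility {L : ℕ} {ι : Type*} (P : Finset ι) (C : ι → Fin L → ℝ)
    (αl αu : ℝ) : ℝ :=
  ((P.filter (fun k => PredCritical (C k) αl αu)).card : ℝ) / (P.card : ℝ)

theorem PredCritical.anti_aux {L : ℕ} {C : Fin L → ℝ} {a a' b b' : ℝ} (ha : a ≤ a')
    (hb : b ≤ b') (h : PredCritical C a' b') : PredCritical C a b := by
  obtain ⟨q, hq, hlt⟩ := h
  obtain ⟨m, hm, hmin⟩ := WellFounded.has_min (wellFounded_lt (α := Fin L))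
    {t | b ≤ C t} ⟨q, hb.trans hq⟩
  refine ⟨m, hm, fun t ht => ?_⟩
  have hmq : m ≤ q := not_lt.mp (hmin q (hb.trans hq))
  exact ⟨ha.trans_lt (hlt t (ht.trans_le hmq)).1, not_le.mp fun h => hmin t h ht⟩

theorem utility_mem_unitInterval_and_antitone {L : ℕ} {ι : Type*} (P : Finset ι)
    (hP : P.Nonempty) (C : ι → Fin L → ℝ) :
    (∀ αl αu : ℝ, 0 ≤ Utility P C αl αu ∧ Utility P C αl αu ≤ 1) ∧
    (∀ αl αl' αu αu' : ℝ, αl ≤ αl' → αu ≤ αu' →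
      Utility P C αl' αu' ≤ Utility P C αl αu) := by
  refine ⟨fun αl αu => ⟨?_, ?_⟩, fun αl αl' αu αu' hl hu => ?_⟩
  · unfold Utility
    positivity
  · unfold Utility
    apply div_le_one_of_le₀
    · exact_mod_cast Finset.card_filter_le _ _
    · positivity
  · unfold Utility
    apply div_le_div_of_nonneg_right _ (Nat.cast_nonneg _)
    exact_mod_cast Finset.card_le_card
      (Finset.monotone_filter_right P fun k _ h => PredCritical.anti_aux hl hu h)
end

section
/- (Proportional fairness of the weighted log-utility maximizer.) Let S ⊆ (Fin N → ℝ) be a convex set, let ρ : Fin N → ℝ satisfy ρ n > 0 for all n, and let u ∈ S with u n > 0 for all n be such that ∑ₙ ρ n · ln(u n) ≥ ∑ₙ ρ n · ln(v n) for every v ∈ S with v n > 0 for all n. Then for every v ∈ S with v n > 0 for all n, the aggregated weighted proportional change is non-positive: ∑ₙ ρ n · (v n − u n) / (u n) ≤ 0. -/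
/-- Proportional fairness of the weighted log-utility maximizer: any maximizer of the
weighted logarithmic objective over the strictly positive vectors of a convex feasible
set is proportionally fair. -/
theorem weighted_log_maximizer_proportionally_fair {N : ℕ}
    (S : Set (Fin N → ℝ)) (hS : Convex ℝ S)
    (ρ : Fin N → ℝ) (hρ : ∀ n, 0 < ρ n)
    (u : Fin N → ℝ) (hu : u ∈ S) (hupos : ∀ n, 0 < u n)
    (hmax : ∀ v ∈ S, (∀ n, 0 < v n) →
      ∑ n, ρ n * Real.log (v n) ≤ ∑ n, ρ n * Real.log (u n)) :
    ∀ v ∈ S, (∀ n, 0 < v n) → ∑ n, ρ n * (v n - u n) / u n ≤ 0 := by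
  intro v hv hvpos
  have hlim : Filter.Tendsto (fun t : ℝ => ∑ n, ρ n * (v n - u n) / (u n + t * (v n - u n)))
      (nhdsWithin 0 (Set.Ioi 0)) (nhds (∑ n, ρ n * (v n - u n) / u n)) := by
    apply tendsto_finsetSum
    intro n _
    have hc : ContinuousAt (fun t : ℝ => ρ n * (v n - u n) / (u n + t * (v n - u n))) 0 := by
      apply ContinuousAt.div
      · fun_prop
      · fun_prop
      · simpa using (hupos n).ne'
    have h := hc.tendsto
    simp only [zero_mul, add_zero] at h
    exact h.mono_left nhdsWithin_le_nhds
  refine le_of_tendsto hlim ?_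
  filter_upwards [Ioo_mem_nhdsGT (show (0 : ℝ) < 1 by norm_num)] with t ht
  obtain ⟨ht0, ht1⟩ := ht
  have hwpos : ∀ n, 0 < u n + t * (v n - u n) := by
    intro n
    nlinarith [mul_pos ht0 (hvpos n), mul_pos (sub_pos.2 ht1) (hupos n)]
  have hw : (fun n => u n + t * (v n - u n)) ∈ S := by
    have h := hS hu hv (sub_nonneg.2 ht1.le) ht0.le (by ring)
    convert h using 1
    ext n
    simp only [Pi.add_apply, Pi.smul_apply, smul_eq_mul]
    ring
  have h1 := hmax _ hw hwpos
  have h2 : t * ∑ n, ρ n * (v n - u n) / (u n + t * (v n - u n)) ≤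
      ∑ n, (ρ n * Real.log (u n + t * (v n - u n)) - ρ n * Real.log (u n)) := by
    rw [Finset.mul_sum]
    apply Finset.sum_le_sum
    intro n _
    have hp := hwpos n
    have h3 := Real.log_le_sub_one_of_pos (div_pos (hupos n) hp)
    rw [Real.log_div (hupos n).ne' hp.ne'] at h3
    have h4 : t * (ρ n * (v n - u n) / (u n + t * (v n - u n))) =
        ρ n * (1 - u n / (u n + t * (v n - u n))) := by
      have := hp.ne'
      rw [one_sub_div this]
      ring
    rw [h4, ← mul_sub]
    exact mul_le_mul_of_nonneg_left (by linarith) (hρ n).le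
  rw [Finset.sum_sub_distrib] at h2
  by_contra! hcon
  have := mul_pos ht0 hcon
  linarith
end

section
/- Let Q be a finite index set of ground-truth normal events, each event k ∈ Q having a confidence-score sequence C k : Fin L → ℝ. For real thresholds αl ≤ αl' and αu ≤ αu' with αl < αu and αl' < αu', the number of events of Q predicted normal under (αl, αu) is at most the number of events of Q predicted normal under (αl', αu'): the true-negative count |{k ∈ Q : k is predicted normal under (αl, αu)}| is monotone (isotone) with respect to the componentwise order on (αl, αu). -/
open Classical

theorem trueNegativeCount_monotone {L : ℕ} {ι : Type*} (Q : Finset ι)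
    (C : ι → Fin L → ℝ) (αl αl' αu αu' : ℝ)
    (hl : αl ≤ αl') (hu : αu ≤ αu') (h : αl < αu) (h' : αl' < αu') :
    (Q.filter (fun k => PredNormal (C k) αl αu)).card ≤
      (Q.filter (fun k => PredNormal (C k) αl' αu')).card := by
  refine Finset.card_le_card (Finset.monotone_filter_right Q ?_)
  intro k _ hk
  by_cases hex : ∃ t, C k t ≤ αl'
  · left
    obtain ⟨q, hq, hmin⟩ := WellFounded.has_min (wellFounded_lt (α := Fin L))
      {t | C k t ≤ αl'} hex
    refine ⟨q, hq, fun t ht => ⟨?_, ?_⟩⟩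
    · by_contra hc
      exact hmin t (not_lt.mp hc) ht
    · rcases hk with ⟨p, hp, hall⟩ | hall
      · have hqp : q ≤ p := not_lt.mp (hmin p (hp.trans hl))
        exact (hall t (ht.trans_le hqp)).2.trans_le hu
      · exact (hall t).2.trans_le hu
  · right
    push Not at hex
    rcases hk with ⟨p, hp, _⟩ | hall
    · exact absurd (hp.trans hl) (not_le.mpr (hex p))
    · exact fun t => ⟨hex t, (hall t).2.trans_le hu⟩
end
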